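/- arXiv:1703.08797 — 2 statements merged into one kernel-verified Lean document; each statement's English description precedes it below -/
import Mathlib

section
/- There exists a unique solution η with η(−1) = 0 of the equation η'(t) + η(t)/(2t) + e^{−√2 η(t)} = 0 on (−∞,−1]. Furthermore there exist T̃₀ and a positive constant C = C(T̃₀) > 0 such that for all t ≤ −T̃₀: −(1/√2) log( C^{−1} log|t|/|t| ) ≤ η(t) ≤ −(1/√2) log( C log|t|/|t| ), and 0 ≤ −η'(t) ≤ C log|t|/|t|. -/
/-!
With `y(s) = η(-s)` the equation becomes `y' = exp(-√2 y) - y / (2 s)` on `[1, ∞)`, `y(1) = 0`.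

*Uniqueness.* The right-hand side is decreasing in `y`, so the squared difference of two solutions
is nonincreasing.

*Existence.* The function `g = √s y` solves `g' = √s exp(-√2 g / √s)`. Replacing `g` by its positive
part on the right makes this vector field bounded on bounded time intervals and globally Lipschitz in
`g`, so Picard–Lindelöf applies on intervals of any length; the solution is nonnegative for `s ≥ 1`,
where the truncation is therefore harmless.

*Asymptotics.* Everything is read off from the defect `m = y' exp(√2 y) = 1 - y exp(√2 y) / (2 s)`,
which satisfies `m' = 1 / s - m (3 + √2 y) / (2 s)`. Comparison of `y` with `log s / 4` gives
`y ≥ log s / 4`, and comparison of `m` with `0` and with `7 / (1 + log s)` then gives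
`0 ≤ m ≤ 7 / (1 + log s)`. Thus `y exp(√2 y) = 2 s (1 - m)` is comparable to `s`, which
forces `exp(√2 y)` to be comparable to `s / log s`, with a constant that does not depend on the
solution; and since `m` tends to `0`, the derivative `y' = m exp(-√2 y)` is bounded by an arbitrarily
small multiple of `log s / s`. This smallness is what allows one and the same `C` to serve in all
the bounds.
-/

open MeasureTheory Real Filter Set Topology

noncomputable section

/-- The heteroclinic profile `w(s) = tanh(s/√2)`. -/
def w (s : ℝ) : ℝ := Real.tanh (s / Real.sqrt 2)

/-- The Allen-Cahn nonlinearity `f(u) = (1-u²)u`. -/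
def f (u : ℝ) : ℝ := (1 - u ^ 2) * u

/-- `f'(u) = 1 - 3u²`. -/
def fp (u : ℝ) : ℝ := 1 - 3 * u ^ 2

/-- The interaction constant β. -/
def β : ℝ :=
  6 * (∫ x : ℝ, Real.exp (Real.sqrt 2 * x) * (1 - w x ^ 2) * deriv w x) /
    ∫ x : ℝ, deriv w x ^ 2

/-- The constants `b_l`. -/
def bcoef (k l : ℕ) : ℝ :=
  -(1 / Real.sqrt 2) * Real.log (((k : ℝ) - (l : ℝ)) * (l : ℝ) / (2 * β))

/-- The constants `γ_j`, determined by `γ_{k-j+1} = -γ_j = (1/2)∑_{i=j}^{k-j} b_i` for `j ≤ k/2`. -/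
def γcoef (k j : ℕ) : ℝ :=
  if j ≤ k / 2 then -(1 / 2) * ∑ i ∈ Finset.Icc j (k - j), bcoef k i
  else (1 / 2) * ∑ i ∈ Finset.Icc (k - j + 1) (j - 1), bcoef k i

/-- `ρ_j⁰(t) = √(-2(n-1)t) + (j-(k+1)/2) η(t) + γ_j`. -/
def ρ0 (n k : ℕ) (η : ℝ → ℝ) (j : ℕ) (t : ℝ) : ℝ :=
  Real.sqrt (-2 * ((n : ℝ) - 1) * t) + ((j : ℝ) - ((k : ℝ) + 1) / 2) * η t + γcoef k j

/-- `ρ_j⁰` extended by the convention `ρ₀⁰ = ρ₁⁰ - η`. -/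
def ρ0e (n k : ℕ) (η : ℝ → ℝ) (j : ℕ) (t : ℝ) : ℝ :=
  if j = 0 then ρ0 n k η 1 t - η t else ρ0 n k η j t

/-- `ρ_j = ρ_j⁰ + h_j`. -/
def ρf (n k : ℕ) (η : ℝ → ℝ) (h : ℕ → ℝ → ℝ) (j : ℕ) (t : ℝ) : ℝ :=
  ρ0 n k η j t + h j t

/-- `z(t,r) = ∑_{j=1}^k (-1)^{j+1} w(r - ρ_j(t)) - 1`. -/
def zf (n k : ℕ) (η : ℝ → ℝ) (h : ℕ → ℝ → ℝ) (t r : ℝ) : ℝ :=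
  (∑ j ∈ Finset.Icc 1 k, (-1 : ℝ) ^ (j + 1) * w (r - ρf n k η h j t)) - 1

/-- The error term `E`. -/
def Ef (n k : ℕ) (η : ℝ → ℝ) (h : ℕ → ℝ → ℝ) (t r : ℝ) : ℝ :=
  (∑ j ∈ Finset.Icc 1 k, (-1 : ℝ) ^ (j + 1) *
      (deriv w (r - ρf n k η h j t) * deriv (ρf n k η h j) t +
        ((n : ℝ) - 1) / r * deriv w (r - ρf n k η h j t))) +
    f (zf n k η h t r) -
    ∑ j ∈ Finset.Icc 1 k, (-1 : ℝ) ^ (j + 1) * f (w (r - ρf n k η h j t))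

/-- The nonlinear term `N(ψ) = f(z+ψ) - f(z) - f'(z)ψ`. -/
def Nf (n k : ℕ) (η : ℝ → ℝ) (h : ℕ → ℝ → ℝ) (ψ : ℝ → ℝ → ℝ) (t r : ℝ) : ℝ :=
  f (zf n k η h t r + ψ t r) - f (zf n k η h t r) - fp (zf n k η h t r) * ψ t r

/-- The piecewise description of the weight `Φ`. -/
def PhiSpec (n k : ℕ) (σ : ℝ) (η : ℝ → ℝ) (Φ : ℝ → ℝ → ℝ) : Prop :=
  (∀ t r : ℝ, r ≤ (ρ0e n k η 0 t + ρ0e n k η 1 t) / 2 →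
      Φ t r = Real.exp (σ * (r - ρ0 n k η 1 t))) ∧
    (∀ t r : ℝ, (ρ0e n k η 0 t + ρ0e n k η 1 t) / 2 ≤ r →
      r ≤ (ρ0 n k η 1 t + ρ0 n k η 2 t) / 2 →
      Φ t r = Real.exp (σ * (r - ρ0 n k η 2 t))) ∧
    (∀ j : ℕ, 2 ≤ j → j < k → ∀ t r : ℝ,
      (ρ0 n k η j t + ρ0 n k η (j - 1) t) / 2 ≤ r →
      r ≤ (ρ0 n k η j t + ρ0 n k η (j + 1) t) / 2 →
      Φ t r =
        Real.exp (σ * (ρ0 n k η (j - 1) t - r)) + Real.exp (σ * (r - ρ0 n k η (j + 1) t))) ∧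
    ∀ t r : ℝ, (ρ0 n k η k t + ρ0 n k η (k - 1) t) / 2 ≤ r →
      Φ t r = Real.exp (σ * (ρ0 n k η (k - 1) t - r))

/-- The class of admissible perturbations `h` on `(-∞, τ]`:
`h ∈ C¹` and `sup |h| + sup (|t|/log|t|)|h'| < 1`. -/
def hSpec (k : ℕ) (τ : ℝ) (h h' : ℕ → ℝ → ℝ) : Prop :=
  (∀ j ∈ Finset.Icc 1 k, ∀ t ≤ τ, HasDerivAt (h j) (h' j t) t) ∧
    (∀ j ∈ Finset.Icc 1 k, ContinuousOn (h' j) (Set.Iic τ)) ∧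
    ∃ a b : ℝ, a + b < 1 ∧
      (∀ t ≤ τ, Real.sqrt (∑ j ∈ Finset.Icc 1 k, h j t ^ 2) ≤ a) ∧
      ∀ t ≤ τ, |t| / Real.log |t| * Real.sqrt (∑ j ∈ Finset.Icc 1 k, h' j t ^ 2) ≤ b

/-- The weighted sup norm `‖u‖_{C_Φ(S)} = ‖u/Φ‖_{L^∞(S)}`. -/
def cnorm (Φ u : ℝ → ℝ → ℝ) (S : Set (ℝ × ℝ)) : ℝ :=
  sSup ((fun p : ℝ × ℝ => |u p.1 p.2| / Φ p.1 p.2) '' S)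

/-- Membership in the space `C_Φ(S)`: continuity and finiteness of the norm. -/
def memC (Φ u : ℝ → ℝ → ℝ) (S : Set (ℝ × ℝ)) : Prop :=
  ContinuousOn (fun p : ℝ × ℝ => u p.1 p.2) S ∧
    BddAbove ((fun p : ℝ × ℝ => |u p.1 p.2| / Φ p.1 p.2) '' S)

/-- The parabolic region `(s,t) × (0,∞)`. -/
def QS (s t : ℝ) : Set (ℝ × ℝ) := Set.Ioo s t ×ˢ Set.Ioi 0

/-- The parabolic region `(-∞,t) × (0,∞)`. -/
def QI (t : ℝ) : Set (ℝ × ℝ) := Set.Iio t ×ˢ Set.Ioi 0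

/-- The norm of the space Λ. -/
def lamNorm (k : ℕ) (T₀ : ℝ) (h h' : ℕ → ℝ → ℝ) : ℝ :=
  sSup ((fun t => Real.sqrt (∑ j ∈ Finset.Icc 1 k, h j t ^ 2)) '' Set.Iic (-T₀)) +
    sSup ((fun t => |t| / Real.log |t| * Real.sqrt (∑ j ∈ Finset.Icc 1 k, h' j t ^ 2)) ''
      Set.Iic (-T₀))

/-- Membership in the set Λ. -/
def lamMem (k : ℕ) (T₀ : ℝ) (h h' : ℕ → ℝ → ℝ) : Prop :=
  (∀ j ∈ Finset.Icc 1 k, ∀ t ≤ -T₀, HasDerivAt (h j) (h' j t) t) ∧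
    (∀ j ∈ Finset.Icc 1 k, ContinuousOn (h' j) (Set.Iic (-T₀))) ∧
    BddAbove ((fun t => Real.sqrt (∑ j ∈ Finset.Icc 1 k, h j t ^ 2)) '' Set.Iic (-T₀)) ∧
    BddAbove ((fun t => |t| / Real.log |t| * Real.sqrt (∑ j ∈ Finset.Icc 1 k, h' j t ^ 2)) ''
      Set.Iic (-T₀)) ∧
    lamNorm k T₀ h h' < 1

/-- The ODE `η' + η/(2t) + e^{-√2 η} = 0` on `(-∞,-1]`, `η(-1) = 0`. -/
def etaODE (η : ℝ → ℝ) : Prop :=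
  η (-1) = 0 ∧
    ∀ t ≤ (-1 : ℝ), HasDerivAt η (-(η t / (2 * t)) - Real.exp (-(Real.sqrt 2) * η t)) t

/-- Partial derivative in time. -/
def dT (ψ : ℝ → ℝ → ℝ) (t r : ℝ) : ℝ := deriv (fun τ => ψ τ r) t

/-- Partial derivative in the radial variable. -/
def dR (ψ : ℝ → ℝ → ℝ) (t r : ℝ) : ℝ := deriv (ψ t) r

/-- Second partial derivative in the radial variable. -/
def dRR (ψ : ℝ → ℝ → ℝ) (t r : ℝ) : ℝ := deriv (deriv (ψ t)) r

/-! ### Comparison, reflection in time, uniqueness -/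

/-- Comparison on `[1, ∞)`: if `f` has a smaller derivative than `B` wherever they touch, then `f`
stays below `B`. -/
lemma fence {f f' B B' : ℝ → ℝ} (hf : ∀ s, 1 ≤ s → HasDerivAt f (f' s) s)
    (hB : ∀ s, 1 ≤ s → HasDerivAt B (B' s) s) (h1 : f 1 ≤ B 1)
    (bound : ∀ s, 1 ≤ s → f s = B s → f' s < B' s) : ∀ s, 1 ≤ s → f s ≤ B s := by
  intro s hs
  refine image_le_of_deriv_right_lt_deriv_boundary' (a := 1) (b := s) (f' := f') (B' := B')
    ?_ ?_ h1 ?_ ?_ ?_ ⟨hs, le_rfl⟩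
  · exact fun x hx => (hf x hx.1).continuousAt.continuousWithinAt
  · exact fun x hx => (hf x hx.1).hasDerivWithinAt
  · exact fun x hx => (hB x hx.1).continuousAt.continuousWithinAt
  · exact fun x hx => (hB x hx.1).hasDerivWithinAt
  · exact fun x hx => bound x hx.1

/-- The equation for `y(s) = η(-s)`, on `[1, ∞)`. -/
def RevODE (y : ℝ → ℝ) : Prop :=
  y 1 = 0 ∧ ∀ s, 1 ≤ s → HasDerivAt y (Real.exp (-(√2 * y s)) - y s / (2 * s)) s

lemma etaODE.rev {η : ℝ → ℝ} (h : etaODE η) : RevODE (fun s => η (-s)) := by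
  refine ⟨h.1, fun s hs => ?_⟩
  have h1 : HasDerivAt (fun s => η (-s)) _ s :=
    (h.2 (-s) (by linarith)).scomp s (hasDerivAt_neg s)
  refine h1.congr_deriv ?_
  have : s ≠ 0 := by positivity
  simp only [smul_eq_mul]
  rw [neg_mul √2 (η (-s))]
  field_simp
  ring

lemma RevODE.eta {y : ℝ → ℝ} (h : RevODE y) : etaODE (fun t => y (-t)) := by
  refine ⟨by simpa using h.1, fun t ht => ?_⟩
  have h1 : HasDerivAt (fun t => y (-t)) _ t :=
    (h.2 (-t) (by linarith)).scomp t (hasDerivAt_neg t)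
  refine h1.congr_deriv ?_
  have : t ≠ 0 := by linarith
  simp only [smul_eq_mul]
  rw [neg_mul √2 (y (-t))]
  field_simp
  ring

/-- The square of the difference of two solutions is nonincreasing, since the right-hand side of the
equation is decreasing in the unknown. -/
lemma RevODE.unique {y z : ℝ → ℝ} (hy : RevODE y) (hz : RevODE z) (s : ℝ) (hs : 1 ≤ s) :
    y s = z s := by
  have hd : ∀ s, 1 ≤ s → HasDerivAt (fun s => (y s - z s) ^ 2)
      (2 * (y s - z s) * ((Real.exp (-(√2 * y s)) - y s / (2 * s)) -
        (Real.exp (-(√2 * z s)) - z s / (2 * s)))) s := by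
    intro s hs
    have h1 : HasDerivAt (fun s => (y s - z s) ^ 2) _ s := ((hy.2 s hs).sub (hz.2 s hs)).pow 2
    exact h1.congr_deriv (by simp)
  have key : AntitoneOn (fun s => (y s - z s) ^ 2) (Ici 1) := by
    refine antitoneOn_of_deriv_nonpos (convex_Ici 1)
      (fun x hx => (hd x hx).continuousAt.continuousWithinAt)
      (fun x hx => (hd x (interior_subset hx)).differentiableAt.differentiableWithinAt) ?_
    intro x hx
    have hx1 : 1 ≤ x := interior_subset hx
    rw [(hd x hx1).deriv]
    have h2 : 0 < √2 := by positivity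
    have hx0 : 0 < 2 * x := by linarith
    rcases le_total (y x) (z x) with h | h
    · have e : Real.exp (-(√2 * z x)) ≤ Real.exp (-(√2 * y x)) := by gcongr
      have e2 : y x / (2 * x) ≤ z x / (2 * x) := by gcongr
      nlinarith
    · have e : Real.exp (-(√2 * y x)) ≤ Real.exp (-(√2 * z x)) := by gcongr
      have e2 : z x / (2 * x) ≤ y x / (2 * x) := by gcongr
      nlinarith
  have := key (mem_Ici.2 le_rfl) (mem_Ici.2 hs) hs
  simp only [hy.1, hz.1, sub_self] at this
  nlinarith [sq_nonneg (y s - z s)]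

/-! ### Existence -/

/-- The vector field of the equation satisfied by `g = √s y`, with `g` replaced by its positive part
so as to make it bounded by `√s`, and Lipschitz in `g` uniformly in `s`. -/
def field (s g : ℝ) : ℝ := √s * Real.exp (-(√2 * (max g 0 / √s)))

lemma field_nonneg (s g : ℝ) : 0 ≤ field s g := by unfold field; positivity

lemma field_le (s g : ℝ) : field s g ≤ √s := by
  unfold field
  refine mul_le_of_le_one_right (by positivity) (Real.exp_le_one_iff.2 ?_)
  have : 0 ≤ √2 * (max g 0 / √s) := by positivity
  linarith

lemma field_lipschitz (s : ℝ) : LipschitzWith 2 (field s) := by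
  -- One-sided form, from `exp (-p) - exp (-q) ≤ q - p` for `0 ≤ p ≤ q`.
  have key : ∀ g k : ℝ, g ≤ k → field s g - field s k ≤ 2 * (k - g) ∧ field s k ≤ field s g := by
    intro g k hgk
    rcases (Real.sqrt_nonneg s).eq_or_lt with h0 | h0
    · simp only [field, ← h0]; constructor <;> linarith
    have hm : max g 0 ≤ max k 0 := max_le_max_right 0 hgk
    have hm2 : max k 0 - max g 0 ≤ k - g := by
      rcases max_cases k 0 with h | h <;> rcases max_cases g 0 with h' | h' <;> linarith
    have h2 : √2 ≤ 2 := Real.sqrt_le_iff.2 ⟨by norm_num, by norm_num⟩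
    constructor
    · set p := √2 * (max g 0 / √s) with hp
      set q := √2 * (max k 0 / √s) with hq
      have hp0 : 0 ≤ p := by positivity
      have hpq : p ≤ q := by rw [hp, hq]; gcongr
      have e1 : Real.exp (-p) ≤ 1 := Real.exp_le_one_iff.2 (by linarith)
      have e2 : 1 + (p - q) ≤ Real.exp (p - q) := by linarith [Real.add_one_le_exp (p - q)]
      have e3 : Real.exp (-q) = Real.exp (-p) * Real.exp (p - q) := by
        rw [← Real.exp_add]; congr 1; ring
      have e4 : Real.exp (-p) - Real.exp (-q) ≤ q - p := by
        rw [e3]; nlinarith [Real.exp_pos (-p)]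
      have e5 : √s * (q - p) = √2 * (max k 0 - max g 0) := by
        rw [hp, hq]; field_simp
      calc field s g - field s k = √s * (Real.exp (-p) - Real.exp (-q)) := by
            simp only [field, hp, hq]; ring
        _ ≤ √s * (q - p) := by gcongr
        _ = √2 * (max k 0 - max g 0) := e5
        _ ≤ 2 * (k - g) := by nlinarith
    · unfold field; gcongr
  refine LipschitzWith.of_dist_le_mul fun g k => ?_
  simp only [Real.dist_eq, NNReal.coe_ofNat]
  rcases le_total g k with h | h
  · obtain ⟨h1, h2⟩ := key g k h
    rw [abs_of_nonneg (by linarith), abs_of_nonpos (by linarith)]; linarith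
  · obtain ⟨h1, h2⟩ := key k g h
    rw [abs_of_nonpos (by linarith), abs_of_nonneg (by linarith)]; linarith

/-- Solutions of the truncated equation on arbitrarily long intervals. They start to the left of
`s = 1`, so that a two-sided derivative at `s = 1` is available. -/
lemma exists_local (N : ℕ) : ∃ g : ℝ → ℝ, g 1 = 0 ∧
    ∀ s ∈ Ioo (1 / 2 : ℝ) (N + 2), HasDerivAt g (field s (g s)) s := by
  have hN : (0 : ℝ) ≤ N := N.cast_nonneg
  let t₀ : Icc (1 / 2 : ℝ) (N + 2) := ⟨1, by constructor <;> linarith⟩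
  have hP : IsPicardLindelof field t₀ (0 : ℝ) ((N + 2) * (N + 2)) 0 (N + 2) 2 := by
    refine ⟨fun t _ => (field_lipschitz t).lipschitzOnWith, fun x _ => ?_, fun t ht x _ => ?_, ?_⟩
    · intro t ht
      have : √t ≠ 0 := (Real.sqrt_pos.2 (by linarith [ht.1])).ne'
      unfold field
      exact ContinuousAt.continuousWithinAt (by fun_prop (disch := assumption))
    · rw [Real.norm_eq_abs, abs_of_nonneg (field_nonneg _ _)]
      refine (field_le _ _).trans ?_
      push_cast
      exact Real.sqrt_le_iff.2 ⟨by linarith, by nlinarith [ht.2]⟩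
    · push_cast
      have : max ((N : ℝ) + 2 - t₀) (t₀ - 1 / 2) ≤ N + 2 := by
        simp only [t₀]; exact max_le (by linarith) (by linarith)
      nlinarith
  obtain ⟨g, h1, h2⟩ := hP.exists_eq_forall_mem_Icc_hasDerivWithinAt₀
  exact ⟨g, h1, fun s hs => (h2 s (Ioo_subset_Icc_self hs)).hasDerivAt (Icc_mem_nhds hs.1 hs.2)⟩

/-- The local solutions agree where they overlap, and glue to a global one. -/
lemma exists_global : ∃ g : ℝ → ℝ, g 1 = 0 ∧
    ∀ s, 1 ≤ s → HasDerivAt g (field s (g s)) s := by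
  choose G hG1 hG using exists_local
  have agree : ∀ M N : ℕ, M ≤ N → EqOn (G M) (G N) (Ioo (1 / 2 : ℝ) (M + 2)) := by
    intro M N hMN
    have hMN' : (M : ℝ) ≤ N := by exact_mod_cast hMN
    have hM : (0 : ℝ) ≤ M := M.cast_nonneg
    refine ODE_solution_unique_of_mem_Ioo (v := field) (K := 2) (s := fun _ => univ) (t₀ := 1)
      (fun t _ => (field_lipschitz t).lipschitzOnWith) ⟨by norm_num, by linarith⟩
      (fun t ht => ⟨hG M t ht, mem_univ _⟩)
      (fun t ht => ⟨hG N t ⟨ht.1, by linarith [ht.2]⟩, mem_univ _⟩) ?_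
    rw [hG1, hG1]
  refine ⟨fun s => G ⌈s⌉₊ s, hG1 _, fun s hs => ?_⟩
  have hs' : s ∈ Ioo (1 / 2 : ℝ) ((⌈s⌉₊ : ℝ) + 1) := ⟨by linarith, by linarith [Nat.le_ceil s]⟩
  have hd : HasDerivAt (G (⌈s⌉₊ + 1)) (field s (G (⌈s⌉₊ + 1) s)) s :=
    hG _ s ⟨hs'.1, by push_cast; linarith [hs'.2]⟩
  have hE : ∀ x ∈ Ioo (1 / 2 : ℝ) ((⌈s⌉₊ : ℝ) + 1), G ⌈x⌉₊ x = G (⌈s⌉₊ + 1) x := by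
    intro x hx
    refine agree _ _ (Nat.ceil_le.2 (by push_cast; exact hx.2.le)) ⟨hx.1, ?_⟩
    linarith [Nat.le_ceil x]
  simp only [hE s hs']
  exact hd.congr_of_eventuallyEq (Filter.eventually_of_mem (Ioo_mem_nhds hs'.1 hs'.2) hE)

lemma exists_rev : ∃ y, RevODE y := by
  obtain ⟨g, h1, hg⟩ := exists_global
  have hpos : ∀ s, 1 ≤ s → 0 ≤ g s := by
    have := fence (f := fun s => - g s) (B := fun _ => 0) (B' := fun _ => 0)
      (fun s hs => (hg s hs).neg) (fun s _ => hasDerivAt_const s 0) (by simp [h1]) ?_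
    · intro s hs; linarith [this s hs]
    · intro s hs h
      have : 0 < √s := Real.sqrt_pos.2 (by linarith)
      simp only [field]
      have : 0 < √s * Real.exp (-(√2 * (max (g s) 0 / √s))) := by positivity
      linarith
  refine ⟨fun s => g s / √s, by simp [h1], fun s hs => ?_⟩
  have hs0 : 0 < s := by linarith
  have hr : 0 < √s := Real.sqrt_pos.2 hs0
  have hd : HasDerivAt (fun s => g s / √s) _ s :=
    (hg s hs).div ((hasDerivAt_id s).sqrt hs0.ne') hr.ne'
  refine hd.congr_deriv ?_
  simp only [field, max_eq_left (hpos s hs), id]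
  have hsq : √s ^ 2 = s := Real.sq_sqrt hs0.le
  rw [hsq]
  field_simp
  rw [show √s ^ 3 = √s * s by rw [pow_succ, hsq, mul_comm]]
  ring

/-! ### Asymptotics -/

lemma RevODE.log_le {y : ℝ → ℝ} (h : RevODE y) : ∀ s, 1 ≤ s → Real.log s / 4 ≤ y s := by
  refine fence (f := fun s => Real.log s / 4) (f' := fun s => s⁻¹ / 4)
    (fun s hs => (Real.hasDerivAt_log (by positivity)).div_const 4) h.2 (by simp [h.1]) ?_
  intro s hs e
  have hs0 : 0 < s := by linarith
  have hx := Real.log_nonneg hs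
  rw [← e]
  set x := Real.log s with hxd
  have hsx : s = Real.exp x := (Real.exp_log hs0).symm
  have h2 : √2 < 3 / 2 := (Real.sqrt_lt' (by norm_num)).2 (by norm_num)
  -- After multiplication by `s = exp x` the claim is `1/4 + x/8 < exp ((1 - √2/4) x)`.
  have e1 : Real.exp (-(√2 * (x / 4))) * s = Real.exp (x - √2 * (x / 4)) := by
    rw [hsx, ← Real.exp_add]; congr 1; ring
  have e2 := Real.add_one_le_exp (x - √2 * (x / 4))
  have e3 : s * (s⁻¹ / 4) < s * (Real.exp (-(√2 * (x / 4))) - x / 4 / (2 * s)) := by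
    have : s * (Real.exp (-(√2 * (x / 4))) - x / 4 / (2 * s))
        = Real.exp (-(√2 * (x / 4))) * s - x / 8 := by field_simp; ring
    rw [this, e1, ← mul_div_assoc, mul_inv_cancel₀ hs0.ne']
    nlinarith
  exact lt_of_mul_lt_mul_left e3 hs0.le

/-- The defect `m = 1 - y exp(√2 y) / (2 s) = y' exp(√2 y)`. -/
def defect (y : ℝ → ℝ) (s : ℝ) : ℝ := 1 - y s * Real.exp (√2 * y s) / (2 * s)

/-- The defect solves an equation that is linear in it. -/
lemma RevODE.defect_deriv {y : ℝ → ℝ} (h : RevODE y) (s : ℝ) (hs : 1 ≤ s) :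
    HasDerivAt (defect y) (1 / s - defect y s * (3 + √2 * y s) / (2 * s)) s := by
  have hs0 : s ≠ 0 := by positivity
  have hy := h.2 s hs
  have h1 : HasDerivAt (defect y) _ s := ((hy.mul (hy.const_mul √2).exp).div ((hasDerivAt_id s).const_mul 2)
    (by simpa using hs0)).const_sub 1
  refine h1.congr_deriv ?_
  simp only [defect, id]
  rw [Real.exp_neg]
  have := (Real.exp_pos (√2 * y s)).ne'
  simp only [Pi.mul_apply]
  field_simp
  ring

lemma RevODE.defect_nonneg {y : ℝ → ℝ} (h : RevODE y) : ∀ s, 1 ≤ s → 0 ≤ defect y s := by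
  have := fence (f := fun s => - defect y s) (B := fun _ => 0) (B' := fun _ => 0)
    (fun s hs => (h.defect_deriv s hs).neg) (fun s _ => hasDerivAt_const s 0)
    (by simp [defect, h.1]) ?_
  · intro s hs; linarith [this s hs]
  · intro s hs e
    have e' : defect y s = 0 := by linarith
    have : 0 < 1 / s := by positivity
    rw [e']; simp only [zero_mul, zero_div, sub_zero]; linarith

lemma RevODE.defect_le {y : ℝ → ℝ} (h : RevODE y) :
    ∀ s, 1 ≤ s → defect y s ≤ 7 / (1 + Real.log s) := by
  refine fence h.defect_deriv (B' := fun s => -(7 / ((1 + Real.log s) ^ 2 * s))) ?_ ?_ ?_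
  · intro s hs
    have hx := Real.log_nonneg hs
    have h1 : HasDerivAt (fun s => 7 / (1 + Real.log s)) _ s := (hasDerivAt_const s (7 : ℝ)).div
      ((Real.hasDerivAt_log (x := s) (by positivity)).const_add 1) (by positivity)
    refine h1.congr_deriv ?_
    field_simp
    ring
  · simp [defect, h.1]
  · intro s hs e
    have hs0 : 0 < s := by linarith
    have hx := Real.log_nonneg hs
    have hy := h.log_le s hs
    rw [e]
    set x := Real.log s
    have h2 : 4 / 3 ≤ √2 := Real.le_sqrt_of_sq_le (by norm_num)
    have hay : x / 3 ≤ √2 * y s := by nlinarith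
    have h7 : 7 / (1 + x) * (3 + x / 3) / (2 * s) ≤ 7 / (1 + x) * (3 + √2 * y s) / (2 * s) := by
      gcongr
    refine lt_of_le_of_lt (sub_le_sub_left h7 _) ?_
    rw [← sub_pos]
    have : -(7 / ((1 + x) ^ 2 * s)) - (1 / s - 7 / (1 + x) * (3 + x / 3) / (2 * s)) =
        (x ^ 2 + 58 * x + 15) / (6 * (1 + x) ^ 2 * s) := by
      field_simp
      ring
    rw [this]
    positivity

/-- The three nontrivial bounds with `C = 1/6`, cleared of denominators by multiplication with
`exp (√2 y)`. The threshold `42` makes the defect at most `7 / 43 < 1 / 6`. -/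
lemma RevODE.bounds {y : ℝ → ℝ} (h : RevODE y) (s : ℝ) (hs : 1 ≤ s) (hx : 42 ≤ Real.log s) :
    Real.exp (√2 * y s) * Real.log s ≤ 6 * s ∧
    s ≤ 6 * (Real.exp (√2 * y s) * Real.log s) ∧
    6 * (defect y s * s) ≤ Real.exp (√2 * y s) * Real.log s := by
  have hs0 : 0 < s := by linarith
  have hy := h.log_le s hs
  have hm0 := h.defect_nonneg s hs
  have hm1 := h.defect_le s hs
  have hm2 : defect y s ≤ 1 / 6 := hm1.trans (by
    rw [div_le_div_iff₀ (by linarith) (by norm_num)]; linarith)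
  have hyu : y s * Real.exp (√2 * y s) = 2 * s * (1 - defect y s) := by
    simp only [defect]; field_simp; ring
  set x := Real.log s with hxd
  have hsx : s = Real.exp x := (Real.exp_log hs0).symm
  set m := defect y s
  set u := Real.exp (√2 * y s) with hu
  have hu0 : 0 < u := Real.exp_pos _
  have hr1 : √2 < 3 / 2 := (Real.sqrt_lt' (by norm_num)).2 (by norm_num)
  have hr2 : 1 ≤ √2 := Real.le_sqrt_of_sq_le (by norm_num)
  have hyx : y s ≤ x := by
    have h1 : u ≤ s := by nlinarith
    have h2 : √2 * y s ≤ x := by rw [hxd]; exact (Real.le_log_iff_exp_le hs0).2 h1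
    nlinarith
  have hlow : 5 / 3 * s ≤ u * x := by nlinarith
  refine ⟨?_, by linarith, by nlinarith⟩
  -- Otherwise `y < x / 3`, hence `u ≤ exp (x / 2)`, which is too small.
  by_contra! hc
  have h1 : y s < x / 3 := by
    have : u * y s < u * (x / 3) := by nlinarith
    exact lt_of_mul_lt_mul_left this hu0.le
  have h2 : u ≤ Real.exp (x / 2) := by
    rw [hu]; exact Real.exp_le_exp.2 (by nlinarith)
  have h3 : s = Real.exp (x / 2) * Real.exp (x / 2) := by
    rw [← Real.exp_add, hsx, hxd, hsx]; simp
  have h4 := Real.add_one_le_exp (x / 2)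
  nlinarith [Real.exp_pos (x / 2)]

/-- **Lemma 5.1.** Existence, uniqueness and asymptotics of the solution of
`η' + η/(2t) + e^{-√2 η} = 0` on `(-∞,-1]` with `η(-1) = 0`. -/
theorem stmt11 :
    (∃ η : ℝ → ℝ, etaODE η) ∧
    (∀ η₁ η₂ : ℝ → ℝ, etaODE η₁ → etaODE η₂ → ∀ t ≤ (-1 : ℝ), η₁ t = η₂ t) ∧
    ∀ η : ℝ → ℝ, etaODE η →
      ∃ T C : ℝ, 1 < T ∧ 0 < C ∧ ∀ t ≤ -T,
        -(1 / Real.sqrt 2) * Real.log (C⁻¹ * (Real.log |t| / |t|)) ≤ η t ∧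
        η t ≤ -(1 / Real.sqrt 2) * Real.log (C * (Real.log |t| / |t|)) ∧
        0 ≤ -deriv η t ∧ -deriv η t ≤ C * (Real.log |t| / |t|) := by
  refine ⟨?_, ?_, ?_⟩
  · obtain ⟨y, hy⟩ := exists_rev
    exact ⟨_, hy.eta⟩
  · intro η₁ η₂ h₁ h₂ t ht
    simpa using h₁.rev.unique h₂.rev (-t) (by linarith)
  · intro η h
    refine ⟨Real.exp 42, 1 / 6, Real.one_lt_exp_iff.2 (by norm_num), by norm_num, fun t ht => ?_⟩
    obtain ⟨s, rfl⟩ : ∃ s, t = -s := ⟨-t, by simp⟩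
    have hsT : Real.exp 42 ≤ s := by linarith
    have hs : 1 ≤ s := (Real.one_le_exp (by norm_num)).trans hsT
    have hs0 : 0 < s := by linarith
    have hx : 42 ≤ Real.log s := (Real.le_log_iff_exp_le hs0).2 hsT
    obtain ⟨b1, b2, b3⟩ := h.rev.bounds s hs hx
    have hm0 := h.rev.defect_nonneg s hs
    have hder : -deriv η (-s) =
        defect (fun s => η (-s)) s / Real.exp (√2 * η (-s)) := by
      rw [(h.2 (-s) (by linarith)).deriv, neg_mul √2 (η (-s)), Real.exp_neg]
      simp only [defect]
      field_simp
      ring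
    rw [hder, abs_neg, abs_of_pos hs0]
    set y := η (-s)
    set m := defect (fun s => η (-s)) s
    have hu0 := Real.exp_pos (√2 * y)
    have hr : 0 < √2 := by positivity
    have hL : 0 < Real.log s / s := by positivity
    have hy : y = -(1 / √2) * (-(√2 * y)) := by field_simp
    have hneg : -(1 / √2) ≤ 0 := by
      have : 0 < 1 / √2 := by positivity
      linarith
    refine ⟨?_, ?_, by positivity, ?_⟩
    · conv_rhs => rw [hy]
      refine mul_le_mul_of_nonpos_left ?_ hneg
      rw [Real.le_log_iff_exp_le (by positivity), Real.exp_neg, inv_le_iff_one_le_mul₀ hu0,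
        ← mul_div_assoc, div_mul_eq_mul_div, le_div_iff₀ hs0]
      linarith
    · conv_lhs => rw [hy]
      refine mul_le_mul_of_nonpos_left ?_ hneg
      rw [Real.log_le_iff_le_exp (by positivity), Real.exp_neg, le_inv_comm₀ (by positivity) hu0,
        ← one_div, le_div_iff₀ (by positivity), ← mul_assoc, ← mul_div_assoc, div_le_one hs0]
      linarith
    · rw [div_le_iff₀ hu0, ← mul_div_assoc, div_mul_eq_mul_div, le_div_iff₀ hs0]
      linarith
end
end

section
/- There is a constant C > 0 such that for all indices 1 ≤ i < j ≤ k and all t ≤ −T₀: ∫₀^∞ r^{n−1} w'(r − ρ_i(t)) w'(r − ρ_j(t)) dr ≤ C (ρ_j⁰(t))^{n−1} (η(t))^{n+1} · log|t| / |t|. In particular, for T₀ large enough the k×k matrix with entries ∫₀^∞ r^{n−1} w'(r − ρ_i(t)) w'(r − ρ_j(t)) dr is nearly diagonal and invertible. -/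
/-!
Write `s = -t` and `m = n - 1`. The proof combines two independent ingredients.

*Growth of `η`.* Comparison with two explicit barriers (`eta_lower`, `eta_upper`) gives
`(log s - log (1 + log s)) / √2 ≤ η ≤ 1 + log s`. Hence `η → ∞`, `exp (-√2 η) ≤ (1 + log s) / s`,
and `η = o(√s)`, so every `ρ_j` and `ρ_j⁰` is comparable to the leading radius `R = √(2 (n - 1) s)`,
while distinct `ρ_i`, `ρ_j` are at distance at least `η - O(1)`.

*Overlap integrals.* Since `w'` lies between multiples of `exp (-√2 |x|)`, the product of two
profiles centred at `a` and `b` with `|b - a| ≥ E - G` satisfies `overlap_pointwise`, which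
integrates to the bound `overlap_le` of order `b ^ m * E * exp (-√2 E)`. With `E = η t` and
`η * exp (-√2 η) ≤ 2 η ^ (n + 1) log s / s` this is the claimed estimate; the power `η ^ (n + 1)`
is more than is needed.

A diagonal entry is at least a constant times `ρ_j ^ m` (`self_overlap_ge`), and the off-diagonal
entries are `O(R ^ m * η * exp (-√2 η)) = o(R ^ m)`, so the matrix is strictly diagonally dominant
for large `s`, hence invertible.
-/

open MeasureTheory Real Filter Set Topology

noncomputable section

/-! ### The profile derivative -/

lemma deriv_w_eq (s : ℝ) : deriv w s = 1 / √2 * (1 / cosh (s / √2) ^ 2) := by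
  have hc := (Real.cosh_pos (s / √2)).ne'
  have h1 : HasDerivAt (fun s : ℝ => s / √2) (1 / √2) s := (hasDerivAt_id s).div_const _
  have h2 : HasDerivAt (fun s : ℝ => sinh (s / √2) / cosh (s / √2))
      ((cosh (s / √2) * (1 / √2) * cosh (s / √2) - sinh (s / √2) * (sinh (s / √2) * (1 / √2)))
        / cosh (s / √2) ^ 2) s := h1.sinh.fun_div h1.cosh hc
  have h3 : w = fun s : ℝ => sinh (s / √2) / cosh (s / √2) := by
    ext s; simp [w, Real.tanh_eq_sinh_div_cosh]
  rw [h3, h2.deriv]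
  have := Real.cosh_sq (s / √2)
  field_simp
  linarith

lemma deriv_w_pos (s : ℝ) : 0 < deriv w s := by
  rw [deriv_w_eq]
  have := Real.cosh_pos (s / √2)
  positivity

lemma continuous_deriv_w : Continuous (deriv w) := by
  have : deriv w = fun s => 1 / √2 * (1 / cosh (s / √2) ^ 2) := funext deriv_w_eq
  rw [this]
  have h : ∀ s : ℝ, cosh (s / √2) ^ 2 ≠ 0 := fun s => pow_ne_zero _ (Real.cosh_pos _).ne'
  fun_prop (disch := exact h _)

lemma sqrt_two_bounds : 1.4 ≤ √2 ∧ √2 ≤ 1.5 := by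
  constructor
  · apply Real.le_sqrt_of_sq_le; norm_num
  · rw [Real.sqrt_le_left (by norm_num)]; norm_num

lemma two_mul_abs_div_sqrt_two (s : ℝ) : |s / √2| + |s / √2| = √2 * |s| := by
  rw [abs_div, abs_of_pos (show (0 : ℝ) < √2 by positivity)]
  have : √2 * √2 = 2 := Real.mul_self_sqrt (by norm_num)
  field_simp
  rw [sq, this]
  ring

lemma deriv_w_le (s : ℝ) : deriv w s ≤ 3 * exp (-(√2 * |s|)) := by
  rw [deriv_w_eq, ← two_mul_abs_div_sqrt_two, ← Real.cosh_abs]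
  set x := |s / √2|
  have h1 : exp x / 2 ≤ cosh x := by
    rw [Real.cosh_eq]; have := exp_pos (-x); linarith
  have h2 : (exp x / 2) ^ 2 ≤ cosh x ^ 2 := by gcongr
  have h3 : exp (-(x + x)) = 1 / exp x ^ 2 := by
    rw [Real.exp_neg, Real.exp_add, sq, one_div]
  have hs : 1 / √2 ≤ 3 / 4 := by
    rw [div_le_div_iff₀ (by positivity) (by norm_num)]
    have := sqrt_two_bounds.1
    linarith
  rw [h3]
  calc 1 / √2 * (1 / cosh x ^ 2) ≤ 3 / 4 * (1 / (exp x / 2) ^ 2) := by gcongr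
    _ = 3 * (1 / exp x ^ 2) := by
      have := (exp_pos x).ne'
      field_simp; norm_num

lemma deriv_w_ge (s : ℝ) : 1 / 2 * exp (-(√2 * |s|)) ≤ deriv w s := by
  rw [deriv_w_eq, ← two_mul_abs_div_sqrt_two, ← Real.cosh_abs (s / √2)]
  have hx : 0 ≤ |s / √2| := abs_nonneg _
  set x := |s / √2|
  have h1 : cosh x ≤ exp x := by
    rw [Real.cosh_eq]; have := exp_le_exp.2 (show -x ≤ x by linarith); linarith
  have h3 : exp (-(x + x)) = 1 / exp x ^ 2 := by
    rw [Real.exp_neg, Real.exp_add, sq, one_div]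
  have hs : 1 / 2 ≤ 1 / √2 := by
    have := sqrt_two_bounds.2
    gcongr; linarith
  rw [h3]
  have := Real.cosh_pos x
  gcongr

/-! ### Estimates for the weighted overlap integrals -/

/-- The decay `exp (-√2 (|r - a| + |r - b|))` of the product of profiles is split with weights
`1 - 1/E` and `1/E`: the first part gives `exp (-√2 E)`, the second one decay in `|r - b|` at
scale `E`, which absorbs the growth of `r ^ m` relative to `b ^ m`. -/
lemma overlap_pointwise (m : ℕ) {a b E G r : ℝ} (hb : 0 < b) (hE : 1 ≤ E) (hG : 0 ≤ G)
    (hd : E - G ≤ |b - a|) (hm : 3 * m * E ≤ b) (hr : 0 ≤ r) :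
    r ^ m * deriv w (r - a) * deriv w (r - b) ≤
      9 * exp (2 * (1 + G)) * b ^ m * exp (-(√2 * E)) * exp (-(1 / E) * |r - b|) := by
  obtain ⟨hq1, hq2⟩ := sqrt_two_bounds
  have hE0 : 0 < E := by linarith
  have hx : 0 ≤ |r - a| := abs_nonneg _
  have hy : 0 ≤ |r - b| := abs_nonneg _
  have htri : |b - a| ≤ |r - a| + |r - b| := by
    have := abs_sub (r - a) (r - b)
    rwa [show r - a - (r - b) = b - a by ring] at this
  have hwa := deriv_w_le (r - a)
  have hwb := deriv_w_le (r - b)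
  have hyb := le_abs_self (r - b)
  set x := |r - a|
  set y := |r - b|
  obtain ⟨u, hu⟩ : ∃ u, u = y / E := ⟨_, rfl⟩
  have hyu : y = u * E := by rw [hu]; field_simp
  have hu0 : 0 ≤ u := by rw [hu]; positivity
  have hrm : r ^ m ≤ b ^ m * exp (u / 3) := by
    have h1 : r ≤ b * exp (y / b) := by
      have h2 : r / b ≤ exp (y / b) := by
        have h3 := Real.add_one_le_exp (r / b - 1)
        have h4 : r / b - 1 ≤ y / b := by
          rw [div_sub_one hb.ne']; gcongr
        have := exp_le_exp.2 h4
        linarith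
      rw [div_le_iff₀ hb] at h2
      linarith
    have h5 : m * (y / b) ≤ u / 3 := by
      rw [mul_div_assoc', div_le_div_iff₀ hb (by norm_num), hyu]
      nlinarith
    calc r ^ m ≤ (b * exp (y / b)) ^ m := by gcongr
      _ = b ^ m * exp (m * (y / b)) := by rw [mul_pow, ← Real.exp_nat_mul]
      _ ≤ _ := by gcongr
  have hkey : E - 1 - G + u ≤ x + y := by
    have h1 : 0 ≤ (E - 1) * (x + y - (E - G)) := mul_nonneg (by linarith) (by linarith)
    have h2 : (E - 1 - G + u) * E ≤ (x + y) * E := by nlinarith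
    exact le_of_mul_le_mul_right h2 hE0
  have hexp : u / 3 + -(√2 * x) + -(√2 * y) ≤ 2 * (1 + G) + -(√2 * E) + -(1 / E) * y := by
    have h1 : -(1 / E) * y = -u := by rw [hu]; ring
    rw [h1]
    have h2 : √2 * (E - 1 - G + u) ≤ √2 * (x + y) := by gcongr
    nlinarith
  calc r ^ m * deriv w (r - a) * deriv w (r - b)
      ≤ (b ^ m * exp (u / 3)) * (3 * exp (-(√2 * x))) * (3 * exp (-(√2 * y))) := by
        have := (deriv_w_pos (r - a)).le
        have := (deriv_w_pos (r - b)).le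
        gcongr
    _ = 9 * b ^ m * exp (u / 3 + -(√2 * x) + -(√2 * y)) := by
        rw [Real.exp_add, Real.exp_add]; ring
    _ ≤ 9 * b ^ m * exp (2 * (1 + G) + -(√2 * E) + -(1 / E) * y) := by gcongr
    _ = _ := by rw [Real.exp_add, Real.exp_add]; ring

lemma integral_exp_neg_abs_sub {E : ℝ} (hE : 0 < E) (b : ℝ) :
    ∫ r : ℝ, exp (-(1 / E) * |r - b|) = 2 * E := by
  rw [integral_sub_right_eq_self (fun r : ℝ => exp (-(1 / E) * |r|)) b,
    integral_comp_abs (f := fun r : ℝ => exp (-(1 / E) * r)),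
    integral_exp_mul_Ioi (by rw [neg_lt_zero]; positivity)]
  simp

lemma integrable_exp_neg_abs_sub {E : ℝ} (hE : 0 < E) (b : ℝ) :
    Integrable (fun r : ℝ => exp (-(1 / E) * |r - b|)) := by
  by_contra h
  have h1 := integral_exp_neg_abs_sub hE b
  rw [integral_undef h] at h1
  linarith

lemma overlap_nonneg (m : ℕ) (a b : ℝ) :
    0 ≤ ∫ r in Set.Ioi (0 : ℝ), r ^ m * deriv w (r - a) * deriv w (r - b) := by
  refine setIntegral_nonneg measurableSet_Ioi fun r hr => ?_
  have := (deriv_w_pos (r - a)).le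
  have := (deriv_w_pos (r - b)).le
  have : 0 ≤ r := le_of_lt hr
  positivity

lemma overlap_le (m : ℕ) {a b E G : ℝ} (hb : 0 < b) (hE : 1 ≤ E) (hG : 0 ≤ G)
    (hd : E - G ≤ |b - a|) (hm : 3 * m * E ≤ b) :
    ∫ r in Set.Ioi (0 : ℝ), r ^ m * deriv w (r - a) * deriv w (r - b) ≤
      18 * exp (2 * (1 + G)) * b ^ m * (E * exp (-(√2 * E))) := by
  have hE0 : 0 < E := by linarith
  have hint := (integrable_exp_neg_abs_sub hE0 b).const_mul
    (9 * exp (2 * (1 + G)) * b ^ m * exp (-(√2 * E)))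
  calc ∫ r in Set.Ioi (0 : ℝ), r ^ m * deriv w (r - a) * deriv w (r - b)
      ≤ ∫ r in Set.Ioi (0 : ℝ),
        9 * exp (2 * (1 + G)) * b ^ m * exp (-(√2 * E)) * exp (-(1 / E) * |r - b|) := by
        refine integral_mono_of_nonneg ?_ hint.integrableOn ?_
        · filter_upwards [ae_restrict_mem measurableSet_Ioi] with r hr
          have := (deriv_w_pos (r - a)).le
          have := (deriv_w_pos (r - b)).le
          have : 0 ≤ r := le_of_lt hr
          simp only [Pi.zero_apply]
          positivity
        · filter_upwards [ae_restrict_mem measurableSet_Ioi] with r hr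
          exact overlap_pointwise m hb hE hG hd hm (le_of_lt hr)
    _ ≤ ∫ r : ℝ, 9 * exp (2 * (1 + G)) * b ^ m * exp (-(√2 * E)) * exp (-(1 / E) * |r - b|) :=
        setIntegral_le_integral hint (ae_of_all _ fun r => by positivity)
    _ = _ := by
        rw [integral_const_mul, integral_exp_neg_abs_sub hE0]; ring

lemma self_overlap_integrable (m : ℕ) {b : ℝ} (hb : 0 < b) (hm : 3 * m ≤ b) :
    IntegrableOn (fun r => r ^ m * deriv w (r - b) * deriv w (r - b)) (Set.Ioi (0 : ℝ)) := by
  have hint := (integrable_exp_neg_abs_sub one_pos b).const_mul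
    (9 * exp (2 * (1 + 1)) * b ^ m * exp (-(√2 * 1)))
  have hc := continuous_deriv_w
  refine Integrable.mono' hint.integrableOn (Continuous.aestronglyMeasurable (by fun_prop)) ?_
  filter_upwards [ae_restrict_mem measurableSet_Ioi] with r hr
  have h0 : 0 ≤ r := le_of_lt hr
  have h1 := (deriv_w_pos (r - b)).le
  rw [Real.norm_of_nonneg (by positivity)]
  exact overlap_pointwise m hb le_rfl zero_le_one (by simp) (by linarith) h0

lemma self_overlap_ge (m : ℕ) {b : ℝ} (hb : 0 < b) (hm : 3 * m ≤ b) :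
    b ^ m * (1 / 4 * exp (-3)) ≤
      ∫ r in Set.Ioi (0 : ℝ), r ^ m * deriv w (r - b) * deriv w (r - b) := by
  have hI := self_overlap_integrable m hb hm
  have hsub : Set.Icc b (b + 1) ⊆ Set.Ioi (0 : ℝ) := fun r hr => lt_of_lt_of_le hb hr.1
  have h1 : volume.real (Set.Icc b (b + 1)) • (b ^ m * (1 / 4 * exp (-3))) ≤
      ∫ r in Set.Icc b (b + 1), r ^ m * deriv w (r - b) * deriv w (r - b) := by
    refine setIntegral_ge_of_const_le measurableSet_Icc (by simp) (fun r hr => ?_)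
      (hI.mono_set hsub)
    obtain ⟨hr1, hr2⟩ := hr
    have h2 : 1 / 2 * exp (-(3 / 2)) ≤ deriv w (r - b) := by
      refine le_trans ?_ (deriv_w_ge (r - b))
      have h3 : √2 * |r - b| ≤ 3 / 2 := by
        rw [abs_of_nonneg (by linarith)]
        have := sqrt_two_bounds.2
        nlinarith [sqrt_nonneg 2]
      gcongr
    have h4 : 1 / 4 * exp (-3) = (1 / 2 * exp (-(3 / 2))) * (1 / 2 * exp (-(3 / 2))) := by
      rw [show (-3 : ℝ) = -(3 / 2) + -(3 / 2) by norm_num, Real.exp_add]; ring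
    rw [h4, mul_assoc (r ^ m)]
    have : 0 ≤ r := by linarith
    have := (deriv_w_pos (r - b)).le
    gcongr
  have h5 : volume.real (Set.Icc b (b + 1)) = 1 := by simp [measureReal_def]
  rw [h5, one_smul] at h1
  refine h1.trans (setIntegral_mono_set hI ?_ hsub.eventuallyLE)
  filter_upwards [ae_restrict_mem measurableSet_Ioi] with r hr
  have h0 : 0 ≤ r := le_of_lt hr
  have h1 := (deriv_w_pos (r - b)).le
  simp only [Pi.zero_apply]
  positivity

/-! ### Growth of the separation function -/

lemma eta_hasDerivAt_neg {η : ℝ → ℝ} (hη : etaODE η) {s : ℝ} (hs : 1 ≤ s) :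
    HasDerivAt (fun s => η (-s)) (-(η (-s) / (2 * s)) + exp (-√2 * η (-s))) s := by
  have h := (hη.2 (-s) (by linarith)).scomp s (hasDerivAt_neg s)
  refine h.congr_deriv ?_
  simp only [smul_eq_mul]
  have : s ≠ 0 := by positivity
  field_simp
  ring

/-- Barrier from below: along `s / (1 + log s)` the source term `exp (-√2 η)` beats the
damping `η / (2 s)`. -/
lemma eta_lower {η : ℝ → ℝ} (hη : etaODE η) {s : ℝ} (hs : 1 ≤ s) :
    1 / √2 * (log s - log (1 + log s)) ≤ η (-s) := by
  have hlog : ∀ x : ℝ, 1 ≤ x → 0 < 1 + log x := fun x hx => by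
    have := Real.log_nonneg hx; linarith
  have hd : ∀ x : ℝ, 1 ≤ x → HasDerivAt (fun x => 1 / √2 * (log x - log (1 + log x)))
      (1 / √2 * (x⁻¹ - x⁻¹ / (1 + log x))) x := fun x hx => by
    have h1 := Real.hasDerivAt_log (show x ≠ 0 by positivity)
    exact (h1.fun_sub ((h1.const_add 1).log (hlog x hx).ne')).const_mul _
  refine image_le_of_deriv_right_lt_deriv_boundary' (a := 1) (b := s)
    (fun x hx => (hd x hx.1).continuousAt.continuousWithinAt)
    (fun x hx => (hd x hx.1).hasDerivWithinAt) ?_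
    (fun x hx => (eta_hasDerivAt_neg hη hx.1).continuousAt.continuousWithinAt)
    (fun x hx => (eta_hasDerivAt_neg hη hx.1).hasDerivWithinAt) ?_ ⟨hs, le_rfl⟩
  · simp [hη.1]
  · intro x hx heq
    have hx1 : 1 ≤ x := hx.1
    have hx0 : 0 < x := by linarith
    have hl := hlog x hx1
    have hl0 := Real.log_nonneg hx1
    have hll : 0 ≤ log (1 + log x) := Real.log_nonneg (by linarith)
    have hq := sqrt_two_bounds.1
    have hi : 1 / √2 ≤ 3 / 4 := by
      rw [div_le_div_iff₀ (by positivity) (by norm_num)]; linarith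
    have hi0 : 0 < 1 / √2 := by positivity
    have hexp : exp (-√2 * η (-x)) = (1 + log x) / x := by
      rw [← heq]
      have h1 : -√2 * (1 / √2 * (log x - log (1 + log x))) = log (1 + log x) - log x := by
        field_simp; ring
      rw [h1, Real.exp_sub, Real.exp_log hl, Real.exp_log hx0]
    rw [hexp, ← heq]
    have h2 : x⁻¹ / (1 + log x) ≥ 0 := by positivity
    have h3 : 1 / √2 * (x⁻¹ - x⁻¹ / (1 + log x)) ≤ 3 / 4 * x⁻¹ := by
      have : 0 ≤ x⁻¹ := by positivity
      nlinarith
    have h4 : -(1 / √2 * (log x - log (1 + log x)) / (2 * x)) + (1 + log x) / x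
        = (1 + log x - 1 / √2 * (log x - log (1 + log x)) / 2) * x⁻¹ := by
      field_simp
      ring
    rw [h4]
    refine lt_of_le_of_lt h3 ?_
    have : 0 < x⁻¹ := by positivity
    gcongr
    nlinarith

lemma eta_upper {η : ℝ → ℝ} (hη : etaODE η) {s : ℝ} (hs : 1 ≤ s) : η (-s) ≤ 1 + log s := by
  have hd : ∀ x : ℝ, 1 ≤ x → HasDerivAt (fun x => 1 + log x) x⁻¹ x := fun x hx =>
    (Real.hasDerivAt_log (show x ≠ 0 by positivity)).const_add 1
  refine image_le_of_deriv_right_lt_deriv_boundary' (a := 1) (b := s)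
    (fun x hx => (eta_hasDerivAt_neg hη hx.1).continuousAt.continuousWithinAt)
    (fun x hx => (eta_hasDerivAt_neg hη hx.1).hasDerivWithinAt) ?_
    (fun x hx => (hd x hx.1).continuousAt.continuousWithinAt)
    (fun x hx => (hd x hx.1).hasDerivWithinAt) ?_ ⟨hs, le_rfl⟩
  · simp [hη.1]
  · intro x hx heq
    have hx1 : 1 ≤ x := hx.1
    have hx0 : 0 < x := by linarith
    have hl0 := Real.log_nonneg hx1
    have hq := sqrt_two_bounds.1
    rw [heq]
    have h1 : 0 ≤ (1 + log x) / (2 * x) := by positivity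
    have h2 : exp (-√2 * (1 + log x)) < exp (-log x) := by
      apply Real.exp_lt_exp.2; nlinarith
    rw [Real.exp_neg, Real.exp_log hx0] at h2
    linarith

lemma exp_neg_eta_le {η : ℝ → ℝ} (hη : etaODE η) {s : ℝ} (hs : 1 ≤ s) :
    exp (-(√2 * η (-s))) ≤ (1 + log s) / s := by
  have hl0 := Real.log_nonneg hs
  have h1 := eta_lower hη hs
  have h2 : √2 * (1 / √2 * (log s - log (1 + log s))) ≤ √2 * η (-s) := by gcongr
  have h3 : √2 * (1 / √2 * (log s - log (1 + log s))) = log s - log (1 + log s) := by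
    field_simp
  calc exp (-(√2 * η (-s))) ≤ exp (log (1 + log s) - log s) := by gcongr; linarith
    _ = _ := by rw [Real.exp_sub, Real.exp_log (by linarith), Real.exp_log (by linarith)]

lemma tendsto_one_add_log_div : Tendsto (fun s : ℝ => (1 + log s) / s) atTop (𝓝 0) := by
  have h1 := Real.isLittleO_log_id_atTop.tendsto_div_nhds_zero
  have h2 := (tendsto_inv_atTop_zero (𝕜 := ℝ)).add h1
  simp only [add_zero] at h2
  refine h2.congr fun s => ?_
  simp only [id]
  ring

lemma tendsto_eta {η : ℝ → ℝ} (hη : etaODE η) : Tendsto (fun s => η (-s)) atTop atTop := by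
  have h1 : Tendsto (fun s => exp (-(√2 * η (-s)))) atTop (𝓝 0) :=
    squeeze_zero' (Eventually.of_forall fun s => (exp_pos _).le)
      ((eventually_ge_atTop 1).mono fun s hs => exp_neg_eta_le hη hs) tendsto_one_add_log_div
  rw [Real.tendsto_exp_comp_nhds_zero, tendsto_neg_atBot_iff] at h1
  exact (tendsto_const_mul_atTop_of_pos (by positivity)).1 h1

lemma eventually_eta_le_sqrt {η : ℝ → ℝ} (hη : etaODE η) (A B : ℝ) (hA : 0 ≤ A) :
    ∀ᶠ s in atTop, A * η (-s) + B ≤ √s := by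
  have h1 : (fun s : ℝ => A * (1 + log s) + B) =o[atTop] fun s : ℝ => s ^ (1 / 2 : ℝ) := by
    have hl := isLittleO_log_rpow_atTop (show (0 : ℝ) < 1 / 2 by norm_num)
    have hc : (fun _ : ℝ => A + B) =o[atTop] fun s : ℝ => s ^ (1 / 2 : ℝ) :=
      Asymptotics.isLittleO_const_left.2 (Or.inr
        (tendsto_norm_atTop_atTop.comp (tendsto_rpow_atTop (by norm_num))))
    refine (hc.add (hl.const_mul_left A)).congr_left fun s => by ring
  filter_upwards [h1.bound one_pos, eventually_ge_atTop 1] with s hs hs1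
  have h2 := eta_upper hη hs1
  rw [← Real.sqrt_eq_rpow, one_mul, Real.norm_of_nonneg (sqrt_nonneg s)] at hs
  have h3 := le_trans (le_abs_self _) hs
  have h4 : A * η (-s) ≤ A * (1 + log s) := by gcongr
  linarith

lemma tendsto_eta_mul_exp {η : ℝ → ℝ} (hη : etaODE η) :
    Tendsto (fun s => η (-s) * exp (-(√2 * η (-s)))) atTop (𝓝 0) := by
  have h := ((Real.tendsto_pow_mul_exp_neg_atTop_nhds_zero 1).comp
    ((tendsto_const_mul_atTop_of_pos (show (0 : ℝ) < √2 by positivity)).2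
      (tendsto_eta hη))).const_mul (1 / √2)
  simp only [mul_zero] at h
  refine h.congr fun s => ?_
  simp only [Function.comp, pow_one]
  field_simp

/-! ### Positions of the transition layers -/

lemma abs_h_lt_one {k : ℕ} {h h' : ℕ → ℝ → ℝ} (hh : hSpec k (-2) h h') {t : ℝ} (ht : t ≤ -2)
    {j : ℕ} (hj : j ∈ Finset.Icc 1 k) : |h j t| < 1 := by
  obtain ⟨-, -, a, b, hab, ha, hb⟩ := hh
  have h1 : 0 ≤ b := by
    refine le_trans ?_ (hb t ht)
    have : 0 ≤ log |t| := Real.log_nonneg (by rw [abs_of_neg (by linarith)]; linarith)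
    positivity
  have h2 : |h j t| ≤ √(∑ j ∈ Finset.Icc 1 k, h j t ^ 2) :=
    Real.abs_le_sqrt (Finset.single_le_sum (f := fun j => h j t ^ 2)
      (fun _ _ => sq_nonneg _) hj)
  linarith [ha t ht]

/-- All quantities are taken at a fixed time: `e` is the separation `η t`, `R` the leading radius
and `G` a common bound for the constants `γ_j`. -/
lemma layer_bounds {m k j : ℕ} {e R G g d ρ : ℝ} (he : 1 ≤ e)
    (hR : 4 * ((k + 3 * m) * e + (G + 1)) ≤ R) (hj1 : 1 ≤ j) (hjk : j ≤ k) (hg : |g| ≤ G)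
    (hd : |d| < 1) (hρ : ρ = R + ((j : ℝ) - ((k : ℝ) + 1) / 2) * e + g) :
    0 < R ∧ R / 2 ≤ ρ + d ∧ ρ + d ≤ 3 * (R / 2) ∧ ρ + d ≤ 2 * ρ ∧ 3 * m * e ≤ ρ + d := by
  have h1 : (1 : ℝ) ≤ j := by exact_mod_cast hj1
  have h2 : (j : ℝ) ≤ k := by exact_mod_cast hjk
  have h3 : |((j : ℝ) - ((k : ℝ) + 1) / 2) * e| ≤ k * e := by
    rw [abs_mul, abs_of_pos (show 0 < e by linarith)]
    gcongr
    rw [abs_le]; constructor <;> linarith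
  rw [abs_le] at h3 hg
  rw [abs_lt] at hd
  have h4 : 0 ≤ 3 * m * e := by positivity
  have h5 : 0 < k * e := mul_pos (by linarith) (by linarith)
  refine ⟨?_, ?_, ?_, ?_, ?_⟩ <;> nlinarith

lemma layer_separation {n k i j : ℕ} {η : ℝ → ℝ} {h : ℕ → ℝ → ℝ} {t G : ℝ} (he : 1 ≤ η t)
    (hij : i ≠ j) (hi : |γcoef k i| ≤ G) (hj : |γcoef k j| ≤ G) (hhi : |h i t| < 1)
    (hhj : |h j t| < 1) :
    η t - (2 * G + 2) ≤ |ρf n k η h j t - ρf n k η h i t| := by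
  have h1 : ρf n k η h j t - ρf n k η h i t =
      ((j : ℝ) - i) * η t - (γcoef k i - γcoef k j + h i t - h j t) := by
    simp only [ρf, ρ0]; ring
  have h2 : η t ≤ |((j : ℝ) - i) * η t| := by
    rw [abs_mul, abs_of_pos (show 0 < η t by linarith)]
    have h3 : (1 : ℝ) ≤ |(j : ℝ) - i| := by
      have : (1 : ℤ) ≤ |(j : ℤ) - i| := Int.one_le_abs (by omega)
      exact_mod_cast this
    nlinarith
  have h4 : |γcoef k i - γcoef k j + h i t - h j t| ≤ 2 * G + 2 := by
    rw [abs_le] at hi hj ⊢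
    rw [abs_lt] at hhi hhj
    constructor <;> linarith
  rw [h1]
  have := abs_sub_abs_le_abs_sub (((j : ℝ) - i) * η t) (γcoef k i - γcoef k j + h i t - h j t)
  linarith

/-- Off-diagonal smallness of the interaction matrix
`∫₀^∞ r^{n-1} w'(r-ρ_i) w'(r-ρ_j) dr`, and its invertibility for `t` negative enough. -/
theorem stmt17 (n k : ℕ) (hn : 2 ≤ n) (hk : 2 ≤ k) (hkeven : Even k)
    (η : ℝ → ℝ) (hη : etaODE η) :
    ∃ C > (0 : ℝ), ∃ T₀ > (1 : ℝ),
      ∀ h h' : ℕ → ℝ → ℝ, hSpec k (-2) h h' →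
      ∀ t ≤ -T₀,
        (∀ i j : ℕ, 1 ≤ i → i < j → j ≤ k →
          (∫ r in Set.Ioi (0 : ℝ),
              r ^ (n - 1) * deriv w (r - ρf n k η h i t) * deriv w (r - ρf n k η h j t)) ≤
            C * ρ0 n k η j t ^ (n - 1) * η t ^ (n + 1) * (Real.log |t| / |t|)) ∧
        IsUnit (Matrix.of fun a b : Fin k =>
          ∫ r in Set.Ioi (0 : ℝ),
            r ^ (n - 1) * deriv w (r - ρf n k η h ((a : ℕ) + 1) t) *
              deriv w (r - ρf n k η h ((b : ℕ) + 1) t)) := by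
  obtain ⟨m, rfl⟩ : ∃ m, n = m + 1 := ⟨n - 1, by omega⟩
  simp only [Nat.add_sub_cancel]
  set G : ℝ := ∑ j ∈ Finset.Icc 1 k, |γcoef k j|
  have hG0 : 0 ≤ G := Finset.sum_nonneg fun _ _ => abs_nonneg _
  have hG : ∀ j ∈ Finset.Icc 1 k, |γcoef k j| ≤ G := fun j hj =>
    Finset.single_le_sum (f := fun j => |γcoef k j|) (fun _ _ => abs_nonneg _) hj
  set K : ℝ := 18 * exp (2 * (1 + (2 * G + 2)))
  have hK : 0 < K := by positivity
  have hsmall : ∀ᶠ s in atTop,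
      k * K * 3 ^ m * (η (-s) * exp (-(√2 * η (-s)))) < 1 / 4 * exp (-3) := by
    have h1 := (tendsto_eta_mul_exp hη).const_mul (k * K * 3 ^ m)
    rw [mul_zero] at h1
    exact h1.eventually_lt_const (by positivity)
  obtain ⟨T, hT⟩ := eventually_atTop.1 (hsmall.and <|
    ((tendsto_eta hη).eventually_ge_atTop 1).and <|
    (Real.tendsto_log_atTop.eventually_ge_atTop 1).and
    (eventually_eta_le_sqrt hη (4 * (k + 3 * m)) (4 * (G + 1)) (by positivity)))
  refine ⟨2 * K * 2 ^ m, by positivity, max T 2, lt_of_lt_of_le one_lt_two (le_max_right _ _),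
    fun h h' hh t ht => ?_⟩
  have hsT : T ≤ -t := by linarith [le_max_left T 2]
  have ht2 : t ≤ -2 := by linarith [le_max_right T 2]
  obtain ⟨hs1, hs2, hs3, hs4⟩ := hT (-t) hsT
  have hexp := exp_neg_eta_le hη (show 1 ≤ -t by linarith)
  simp only [neg_neg] at hs1 hs2 hs4 hexp
  have hh1 : ∀ j ∈ Finset.Icc 1 k, |h j t| < 1 := fun j hj => abs_h_lt_one hh ht2 hj
  obtain ⟨R, hRdef⟩ : ∃ R, R = √(-2 * (((m + 1 : ℕ) : ℝ) - 1) * t) := ⟨_, rfl⟩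
  have hRs : √(-t) ≤ R := by
    rw [hRdef]
    apply Real.sqrt_le_sqrt
    have : (1 : ℝ) ≤ m := by exact_mod_cast (show 1 ≤ m by omega)
    push_cast
    nlinarith
  have hlay : ∀ j ∈ Finset.Icc 1 k, 0 < R ∧ R / 2 ≤ ρf (m + 1) k η h j t ∧
      ρf (m + 1) k η h j t ≤ 3 * (R / 2) ∧
      ρf (m + 1) k η h j t ≤ 2 * ρ0 (m + 1) k η j t ∧
      3 * m * η t ≤ ρf (m + 1) k η h j t := fun j hj =>
    layer_bounds hs2 (by linarith) (Finset.mem_Icc.1 hj).1 (Finset.mem_Icc.1 hj).2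
      (hG j hj) (hh1 j hj) (by rw [ρ0, hRdef])
  have hoff : ∀ i ∈ Finset.Icc 1 k, ∀ j ∈ Finset.Icc 1 k, i ≠ j →
      (∫ r in Set.Ioi (0 : ℝ), r ^ m * deriv w (r - ρf (m + 1) k η h i t) *
        deriv w (r - ρf (m + 1) k η h j t)) ≤
        K * ρf (m + 1) k η h j t ^ m * (η t * exp (-(√2 * η t))) := fun i hi j hj hij => by
    obtain ⟨hR, h1, -, -, h2⟩ := hlay j hj
    exact overlap_le m (by linarith) hs2 (by positivity)
      (layer_separation hs2 hij (hG i hi) (hG j hj) (hh1 i hi) (hh1 j hj)) h2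
  constructor
  · intro i j hi hij hjk
    have hj : j ∈ Finset.Icc 1 k := Finset.mem_Icc.2 ⟨by omega, hjk⟩
    refine (hoff i (Finset.mem_Icc.2 ⟨hi, by omega⟩) j hj hij.ne).trans ?_
    obtain ⟨hR, h1, -, h2, -⟩ := hlay j hj
    have h3 : |t| = -t := abs_of_neg (by linarith)
    have h4 : exp (-(√2 * η t)) ≤ 2 * (log |t| / |t|) := by
      rw [h3]
      refine hexp.trans ?_
      rw [mul_div_assoc']
      have : 0 < -t := by linarith
      gcongr
      linarith
    have h5 : η t ≤ η t ^ (m + 1 + 1) := le_self_pow₀ hs2 (by omega)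
    have h6 : 0 ≤ ρf (m + 1) k η h j t := by linarith
    calc K * ρf (m + 1) k η h j t ^ m * (η t * exp (-(√2 * η t)))
        ≤ K * (2 * ρ0 (m + 1) k η j t) ^ m * (η t ^ (m + 1 + 1) * (2 * (log |t| / |t|))) := by
          have : 0 ≤ 2 * ρ0 (m + 1) k η j t := by linarith
          gcongr
      _ = _ := by rw [mul_pow]; ring
  · rw [Matrix.isUnit_iff_isUnit_det, isUnit_iff_ne_zero]
    refine det_ne_zero_of_sum_row_lt_diag fun a => ?_
    have hmem : ∀ a : Fin k, (a : ℕ) + 1 ∈ Finset.Icc 1 k := fun a =>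
      Finset.mem_Icc.2 ⟨by omega, a.2⟩
    simp only [Matrix.of_apply]
    obtain ⟨hR, ha1, -, -, ha2⟩ := hlay _ (hmem a)
    have hx : 0 ≤ η t * exp (-(√2 * η t)) := by positivity
    calc _ ≤ ∑ b ∈ Finset.univ.erase a,
          K * (3 * (R / 2)) ^ m * (η t * exp (-(√2 * η t))) := by
          refine Finset.sum_le_sum fun b hb => ?_
          rw [Real.norm_of_nonneg (overlap_nonneg m _ _)]
          have hab : (a : ℕ) + 1 ≠ (b : ℕ) + 1 := fun h =>
            (Finset.mem_erase.1 hb).1 (Fin.ext (by omega))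
          refine (hoff _ (hmem a) _ (hmem b) hab).trans ?_
          obtain ⟨-, hb1, hb2, -, -⟩ := hlay _ (hmem b)
          have : 0 ≤ ρf (m + 1) k η h (b + 1) t := by linarith
          gcongr
      _ ≤ k * (K * (3 * (R / 2)) ^ m * (η t * exp (-(√2 * η t)))) := by
          rw [Finset.sum_const, nsmul_eq_mul]
          have : ((Finset.univ.erase a).card : ℝ) ≤ k := by
            exact_mod_cast (Finset.card_erase_le).trans (by simp)
          gcongr
      _ = (R / 2) ^ m * (k * K * 3 ^ m * (η t * exp (-(√2 * η t)))) := by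
          rw [mul_pow]; ring
      _ < (R / 2) ^ m * (1 / 4 * exp (-3)) := by gcongr
      _ ≤ ρf (m + 1) k η h (a + 1) t ^ m * (1 / 4 * exp (-3)) := by gcongr
      _ ≤ _ := by
          refine le_trans ?_ (Real.le_norm_self _)
          refine self_overlap_ge m (by linarith) ?_
          have : (0 : ℝ) ≤ m := by positivity
          nlinarith
end
end
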